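/- Let F : [0,∞) → ℝ be a function, let m and n be positive integers, and set d := min{m,n}. The following are equivalent: (1) F[A] is totally non-negative for every totally non-negative m × n matrix A; (2) F[A] is totally non-negative for every totally non-negative d × d matrix A; (3) F is a non-negative constant, or: if d = 1, F(x) ≥ 0 for all x ≥ 0; if d = 2, F(x) = c·1_{x>0} or F(x) = c·x^α for some c > 0 and some α > 0; if d = 3, F(x) = c·x^α for some c > 0 and some α ≥ 1; if d ≥ 4, F(x) = c·x for some c > 0. -/

import Mathlib

/-- An `m × n` real matrix is totally non-negative if all of its minors
(determinants of square submatrices on increasing row and column indices)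
are non-negative. -/
def IsTNMat {m n : ℕ} (A : Matrix (Fin m) (Fin n) ℝ) : Prop :=
  ∀ (k : ℕ) (r : Fin k → Fin m) (c : Fin k → Fin n),
    StrictMono r → StrictMono c → 0 ≤ (A.submatrix r c).det

/-!
Minors involve only rows and columns in increasing position, so everything happens at the size
`d = min m n`. For `d ≥ 2`, matrices with entries `x`, `y`, `x y`, `1` force
`F (x y) F 1 = F x F y` and, if `F 1 > 0`, monotonicity of `F`; so `F` is constant or a multiple
of a power of exponent `α ≥ 0` on `(0, ∞)`. One `3 × 3` matrix forces `α ≥ 1`. Conversely the six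
terms of a `3 × 3` determinant have equal products over even and over odd permutations, and for
them the inequality of the sums survives the power `α ≥ 1` by a convexity argument. For `d ≥ 4`, a
family `J + t B` of `4 × 4` matrices with `J` the all-ones matrix is expanded at `t = 0`: the
leading coefficient of the determinant of the power is `-2 α³ (α - 1)`, whence `α ≤ 1`.
-/

theorem det_of_sum_rows {R m n ι : Type*} [CommRing R] [Fintype ι] [DecidableEq ι]
    (A : Matrix m n R) (s : ι → Finset m) (c : ι → n) :
    (Matrix.of fun i j ↦ ∑ l ∈ s i, A l (c j)).det =
      ∑ p ∈ Fintype.piFinset s, (A.submatrix p c).det := by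
  have hsum : (Matrix.of fun i j ↦ ∑ l ∈ s i, A l (c j)) = fun i ↦ ∑ l ∈ s i, A.submatrix id c l :=
    funext fun i ↦ funext fun j ↦ (Finset.sum_apply j (s i) (A.submatrix id c)).symm
  rw [hsum]
  exact Matrix.detRowAlternating.map_sum_finset (fun _ ↦ A.submatrix id c) s

namespace IsTNMat

variable {m n p q : ℕ} {A : Matrix (Fin m) (Fin n) ℝ}

theorem submatrix (hA : IsTNMat A) {r : Fin p → Fin m} {c : Fin q → Fin n}
    (hr : Monotone r) (hc : Monotone c) : IsTNMat (A.submatrix r c) := by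
  intro k r' c' hr' hc'
  rw [Matrix.submatrix_submatrix]
  by_cases hri : (r ∘ r').Injective
  · by_cases hci : (c ∘ c').Injective
    · exact hA k _ _ ((hr.comp hr'.monotone).strictMono_of_injective hri)
        ((hc.comp hc'.monotone).strictMono_of_injective hci)
    · obtain ⟨i, j, hij, hne⟩ := Function.not_injective_iff.mp hci
      exact (Matrix.det_zero_of_column_eq hne fun l ↦ congrArg (A _) hij).ge
  · obtain ⟨i, j, hij, hne⟩ := Function.not_injective_iff.mp hri
    exact (Matrix.det_zero_of_row_eq hne <| funext fun l ↦ congrArg (A · _) hij).ge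

theorem det_nonneg {A : Matrix (Fin n) (Fin n) ℝ} (hA : IsTNMat A) : 0 ≤ A.det :=
  hA n id id strictMono_id strictMono_id

theorem apply_nonneg (hA : IsTNMat A) (i : Fin m) (j : Fin n) : 0 ≤ A i j := by
  simpa using (hA.submatrix (monotone_const (c := i)) (monotone_const (c := j))).det_nonneg (n := 1)

theorem mul_le_mul (hA : IsTNMat A) {i i' : Fin m} {j j' : Fin n} (hi : i ≤ i') (hj : j ≤ j') :
    A i j' * A i' j ≤ A i j * A i' j' := by
  have := (hA.submatrix (r := ![i, i']) (c := ![j, j']) (by simp [hi]) (by simp [hj])).det_nonneg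
  rw [Matrix.det_fin_two] at this
  simpa using this

theorem transpose (hA : IsTNMat A) : IsTNMat A.transpose := fun k r c hr hc ↦ by
  rw [← Matrix.transpose_submatrix, Matrix.det_transpose]
  exact hA k c r hc hr

theorem smul (hA : IsTNMat A) {a : ℝ} (ha : 0 ≤ a) : IsTNMat (a • A) := fun k r c hr hc ↦ by
  change 0 ≤ (a • A.submatrix r c).det
  rw [Matrix.det_smul]
  exact mul_nonneg (by positivity) (hA k r c hr hc)

theorem map_congr (hA : IsTNMat A) {F G : ℝ → ℝ} (h : ∀ x, 0 ≤ x → F x = G x) :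
    A.map F = A.map G :=
  Matrix.ext fun i j ↦ h _ (hA.apply_nonneg i j)

-- Subtracting consecutive rows turns a minor of the matrix of partial sums into a determinant
-- whose rows are sums over consecutive blocks of rows of `A`.
theorem partialSum_rows (hA : IsTNMat A) :
    IsTNMat (Matrix.of fun i j ↦ ∑ l ∈ Finset.Iic i, A l j) := by
  rintro (_ | k) r c hr hc
  · simp
  let block : Fin (k + 1) → Finset (Fin m) :=
    Fin.cases (Finset.Iic (r 0)) fun l ↦ Finset.Ioc (r l.castSucc) (r l.succ)
  have hdet : ((Matrix.of fun i j ↦ ∑ l ∈ Finset.Iic i, A l j).submatrix r c).det =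
      (Matrix.of fun i j ↦ ∑ l ∈ block i, A l (c j)).det := by
    refine Matrix.det_eq_of_forall_row_eq_smul_add_pred (fun _ ↦ 1) (fun j ↦ rfl) fun i j ↦ ?_
    have hle : r i.castSucc ≤ r i.succ := hr.monotone (Fin.castSucc_lt_succ (i := i)).le
    have hdisj : Disjoint (Finset.Ioc (r i.castSucc) (r i.succ)) (Finset.Iic (r i.castSucc)) := by
      simp +contextual [Finset.disjoint_left]
    simp only [Matrix.submatrix_apply, Matrix.of_apply, block, Fin.cases_succ, one_mul]
    rw [← Finset.sum_union hdisj]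
    congr 1
    grind
  rw [hdet, det_of_sum_rows]
  refine Finset.sum_nonneg fun p hp ↦ hA _ p c (Fin.strictMono_iff_lt_succ.2 fun i ↦ ?_) hc
  rw [Fintype.mem_piFinset] at hp
  have hle (i) : p i ≤ r i := by
    cases i using Fin.cases with
    | zero => exact Finset.mem_Iic.1 (hp 0)
    | succ i => exact (Finset.mem_Ioc.1 (hp i.succ)).2
  exact (hle i.castSucc).trans_lt (Finset.mem_Ioc.1 (hp i.succ)).1

theorem partialSum_cols (hA : IsTNMat A) :
    IsTNMat (Matrix.of fun i j ↦ ∑ l ∈ Finset.Iic j, A i l) :=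
  hA.transpose.partialSum_rows.transpose

end IsTNMat

theorem isTNMat_fin_one_iff {A : Matrix (Fin 1) (Fin 1) ℝ} : IsTNMat A ↔ 0 ≤ A 0 0 := by
  refine ⟨fun hA ↦ hA.apply_nonneg 0 0, fun h k r c hr hc ↦ ?_⟩
  have hk : k ≤ 1 := by simpa using Fintype.card_le_of_injective r hr.injective
  interval_cases k
  · simp
  · simpa [Subsingleton.elim _ (0 : Fin 1)] using h

theorem isTNMat_fin_two_iff {A : Matrix (Fin 2) (Fin 2) ℝ} :
    IsTNMat A ↔ (∀ i j, 0 ≤ A i j) ∧ 0 ≤ A.det := by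
  refine ⟨fun hA ↦ ⟨hA.apply_nonneg, hA.det_nonneg⟩, fun ⟨hentry, hdet⟩ k r c hr hc ↦ ?_⟩
  have hk : k ≤ 2 := by simpa using Fintype.card_le_of_injective r hr.injective
  interval_cases k
  · simp
  · simpa using hentry _ _
  · rwa [hr.eq_id, hc.eq_id]

theorem isTNMat_fin_three_iff {A : Matrix (Fin 3) (Fin 3) ℝ} :
    IsTNMat A ↔ (∀ i j, 0 ≤ A i j) ∧
      (∀ i i' j j', i < i' → j < j' → A i j' * A i' j ≤ A i j * A i' j') ∧ 0 ≤ A.det := by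
  refine ⟨fun hA ↦ ⟨hA.apply_nonneg, fun _ _ _ _ hi hj ↦ hA.mul_le_mul hi.le hj.le,
    hA.det_nonneg⟩, fun ⟨hentry, hminor, hdet⟩ k r c hr hc ↦ ?_⟩
  have hk : k ≤ 3 := by simpa using Fintype.card_le_of_injective r hr.injective
  interval_cases k
  · simp
  · simpa using hentry _ _
  · simpa [Matrix.det_fin_two] using hminor _ _ _ _ (hr Fin.zero_lt_one) (hc Fin.zero_lt_one)
  · rwa [hr.eq_id, hc.eq_id]

/-- `F`, applied entrywise, maps totally non-negative `m × n` matrices to totally non-negative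
ones: condition (1) of the theorem, and condition (2) for `m = n = d`. -/
def PreservesTN (F : ℝ → ℝ) (m n : ℕ) : Prop :=
  ∀ A : Matrix (Fin m) (Fin n) ℝ, IsTNMat A → IsTNMat (A.map F)

namespace PreservesTN

variable {F G : ℝ → ℝ} {m n p q : ℕ}

theorem congr (hF : PreservesTN F m n) (h : ∀ x, 0 ≤ x → F x = G x) : PreservesTN G m n :=
  fun A hA ↦ hA.map_congr h ▸ hF A hA

theorem const_mul (hF : PreservesTN F m n) {c : ℝ} (hc : 0 ≤ c) :
    PreservesTN (fun x ↦ c * F x) m n :=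
  fun A hA ↦ (hF A hA).smul hc

-- A `p × q` matrix is padded to an `m × n` one by repeating its last row and column.
theorem mono (hF : PreservesTN F m n) (hp : 0 < p) (hpm : p ≤ m) (hq : 0 < q) (hqn : q ≤ n) :
    PreservesTN F p q := by
  obtain ⟨p, rfl⟩ := Nat.exists_eq_add_one.2 hp
  obtain ⟨q, rfl⟩ := Nat.exists_eq_add_one.2 hq
  intro A hA
  have hpad :
      IsTNMat (A.submatrix (fun i : Fin m ↦ Fin.clamp i p) (fun j : Fin n ↦ Fin.clamp j q)) :=
    hA.submatrix (fun _ _ h ↦ Fin.clamp_monotone h) (fun _ _ h ↦ Fin.clamp_monotone h)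
  convert (hF _ hpad).submatrix (Fin.strictMono_castLE hpm).monotone
    (Fin.strictMono_castLE hqn).monotone using 1
  have hclamp {d : ℕ} (i : Fin (d + 1)) : Fin.clamp i d = i := Fin.ext (by simp; omega)
  ext i j
  simp [hclamp]

theorem of_nonneg_const {c : ℝ} (hc : 0 ≤ c) (hF : ∀ x, 0 ≤ x → F x = c) : PreservesTN F m n := by
  intro A hA
  rw [hA.map_congr hF]
  exact (isTNMat_fin_one_iff.2 hc : IsTNMat !![c]).submatrix (r := fun _ : Fin m ↦ 0)
    (c := fun _ : Fin n ↦ 0) monotone_const monotone_const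

end PreservesTN

theorem preservesTN_id (m n : ℕ) : PreservesTN id m n := fun _ hA ↦ hA

theorem preservesTN_iff_min {F : ℝ → ℝ} {m n : ℕ} (hm : 0 < m) (hn : 0 < n) :
    PreservesTN F m n ↔ PreservesTN F (min m n) (min m n) := by
  refine ⟨fun hF ↦ hF.mono (by simp [*]) (min_le_left m n) (by simp [*]) (min_le_right m n),
    fun hF A hA k r c hr hc ↦ ?_⟩
  obtain rfl | hk := k.eq_zero_or_pos
  · simp
  have hkm : k ≤ m := by simpa using Fintype.card_le_of_injective r hr.injective
  have hkn : k ≤ n := by simpa using Fintype.card_le_of_injective c hc.injective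
  have hFk : PreservesTN F k k := hF.mono hk (le_min hkm hkn) hk (le_min hkm hkn)
  exact (hFk _ (hA.submatrix hr.monotone hc.monotone)).det_nonneg

/-! ### Sizes one and two -/

theorem preservesTN_one_iff {F : ℝ → ℝ} : PreservesTN F 1 1 ↔ ∀ x, 0 ≤ x → 0 ≤ F x :=
  ⟨fun hF x hx ↦ (hF !![x] (isTNMat_fin_one_iff.2 hx)).apply_nonneg 0 0,
    fun hF _ hA ↦ isTNMat_fin_one_iff.2 (hF _ (hA.apply_nonneg 0 0))⟩

theorem preservesTN_two_iff_mul_le_mul {F : ℝ → ℝ} :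
    PreservesTN F 2 2 ↔ (∀ x, 0 ≤ x → 0 ≤ F x) ∧
      ∀ a b c d, 0 ≤ a → 0 ≤ b → 0 ≤ c → 0 ≤ d → b * c ≤ a * d → F b * F c ≤ F a * F d := by
  refine ⟨fun hF ↦ ⟨preservesTN_one_iff.1 (hF.mono one_pos one_le_two one_pos one_le_two),
    fun a b c d ha hb hc hd h ↦ ?_⟩, fun ⟨hnonneg, hmul⟩ A hA ↦ isTNMat_fin_two_iff.2
      ⟨fun i j ↦ hnonneg _ (hA.apply_nonneg i j), ?_⟩⟩
  · have hA : IsTNMat !![a, b; c, d] := isTNMat_fin_two_iff.2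
      ⟨by simp [Fin.forall_fin_two, ha, hb, hc, hd], by simpa [Matrix.det_fin_two] using h⟩
    simpa using (hF _ hA).mul_le_mul (i := 0) (i' := 1) (j := 0) (j' := 1) zero_le_one zero_le_one
  · simpa [Matrix.det_fin_two] using hmul _ _ _ _ (hA.apply_nonneg 0 0) (hA.apply_nonneg 0 1)
      (hA.apply_nonneg 1 0) (hA.apply_nonneg 1 1) (hA.mul_le_mul zero_le_one zero_le_one)

theorem exists_rpow_of_mul_of_monotoneOn {f : ℝ → ℝ} (hpos : ∀ x, 0 < x → 0 < f x)
    (hmul : ∀ x y, 0 < x → 0 < y → f (x * y) = f x * f y) (hmono : MonotoneOn f (Set.Ioi 0)) :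
    ∃ α : ℝ, 0 ≤ α ∧ ∀ x, 0 < x → f x = x ^ α := by
  let φ : ℝ →+ ℝ := AddMonoidHom.mk' (fun t ↦ Real.log (f (Real.exp t))) fun s t ↦ by
    rw [Real.exp_add, hmul _ _ (Real.exp_pos s) (Real.exp_pos t),
      Real.log_mul (hpos _ (Real.exp_pos s)).ne' (hpos _ (Real.exp_pos t)).ne']
  have hφ : Monotone φ := fun s t hst ↦ Real.log_le_log (hpos _ (Real.exp_pos s))
    (hmono (Real.exp_pos s) (Real.exp_pos t) (Real.exp_le_exp.2 hst))
  have hcont : Continuous φ :=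
    MeasureTheory.Measure.AddMonoidHom.continuous_of_measurable φ hφ.measurable
  have hlin (t : ℝ) : φ t = t * φ 1 := by simpa using map_real_smul φ hcont t 1
  refine ⟨φ 1, by simpa using hφ zero_le_one, fun x hx ↦ ?_⟩
  rw [Real.rpow_def_of_pos hx, ← hlin, AddMonoidHom.mk'_apply, Real.exp_log hx,
    Real.exp_log (hpos x hx)]

namespace PreservesTN

variable {F : ℝ → ℝ}

theorem mul_eq_mul (hF : PreservesTN F 2 2) {x y : ℝ} (hx : 0 ≤ x) (hy : 0 ≤ y) :
    F (x * y) * F 1 = F x * F y := by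
  have hmul := (preservesTN_two_iff_mul_le_mul.1 hF).2
  have hxy := mul_nonneg hx hy
  exact le_antisymm (hmul x (x * y) 1 y hx hxy zero_le_one hy (by simp))
    (hmul (x * y) x y 1 hxy hx hy zero_le_one (by simp))

theorem monotoneOn (hF : PreservesTN F 2 2) (h1 : 0 < F 1) : MonotoneOn F (Set.Ici 0) :=
  fun x hx y hy hxy ↦ le_of_mul_le_mul_right
    ((preservesTN_two_iff_mul_le_mul.1 hF).2 y x 1 1 hy hx zero_le_one zero_le_one (by simpa)) h1

theorem pos (hF : PreservesTN F 2 2) (h1 : 0 < F 1) {x : ℝ} (hx : 0 < x) : 0 < F x := by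
  have hinv : F 1 * F 1 = F x * F x⁻¹ := by
    simpa [hx.ne'] using hF.mul_eq_mul hx.le (inv_nonneg.2 hx.le)
  have hne : F x ≠ 0 := left_ne_zero_of_mul (hinv ▸ (mul_pos h1 h1).ne')
  exact ((preservesTN_two_iff_mul_le_mul.1 hF).1 x hx.le).lt_of_ne' hne

theorem const_or_rpow_on_pos (hF : PreservesTN F 2 2) :
    (∃ c, 0 ≤ c ∧ ∀ x, 0 ≤ x → F x = c) ∨
      F 0 = 0 ∧ ∃ c, 0 < c ∧ ∃ α : ℝ, 0 ≤ α ∧ ∀ x, 0 < x → F x = c * x ^ α := by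
  have hnonneg := (preservesTN_two_iff_mul_le_mul.1 hF).1
  obtain h1 | h1 := (hnonneg 1 zero_le_one).eq_or_lt
  · refine .inl ⟨0, le_rfl, fun x hx ↦ ?_⟩
    simpa [← h1] using (hF.mul_eq_mul hx hx).symm
  by_cases h0 : F 0 = 0
  · obtain ⟨α, hα, hpow⟩ := exists_rpow_of_mul_of_monotoneOn (f := fun x ↦ F x / F 1)
      (fun x hx ↦ div_pos (hF.pos h1 hx) h1)
      (fun x y hx hy ↦ by
        field_simp
        exact hF.mul_eq_mul hx.le hy.le)
      fun x hx y hy hxy ↦ div_le_div_of_nonneg_right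
        (hF.monotoneOn h1 (Set.Ioi_subset_Ici_self hx) (Set.Ioi_subset_Ici_self hy) hxy) h1.le
    exact .inr ⟨h0, F 1, h1, α, hα, fun x hx ↦ by rw [← hpow x hx, mul_div_cancel₀ _ h1.ne']⟩
  · refine .inl ⟨F 1, h1.le, fun x hx ↦ mul_left_cancel₀ h0 ?_⟩
    simpa using (hF.mul_eq_mul le_rfl hx).symm

end PreservesTN

theorem preservesTN_two_indicator : PreservesTN (fun x ↦ if 0 < x then 1 else 0) 2 2 := by
  refine preservesTN_two_iff_mul_le_mul.2 ⟨fun x _ ↦ by positivity, fun a b c d ha hb hc hd h ↦ ?_⟩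
  obtain rfl | hb := hb.eq_or_lt
  · simp only [lt_self_iff_false, ↓reduceIte, mul_ite, mul_one, mul_zero, ite_self]
    positivity
  obtain rfl | hc := hc.eq_or_lt
  · simp only [lt_self_iff_false, ↓reduceIte, mul_zero, mul_ite, mul_one]
    positivity
  have had : 0 < a * d := (mul_pos hb hc).trans_le h
  simp [hb, hc, pos_of_mul_pos_left had hd, pos_of_mul_pos_right had ha]

theorem preservesTN_two_rpow {α : ℝ} (hα : 0 ≤ α) : PreservesTN (· ^ α) 2 2 :=
  preservesTN_two_iff_mul_le_mul.2 ⟨fun x hx ↦ Real.rpow_nonneg hx α,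
    fun a b c d ha hb hc hd h ↦ by
      rw [← Real.mul_rpow hb hc, ← Real.mul_rpow ha hd]
      exact Real.rpow_le_rpow (mul_nonneg hb hc) h hα⟩

theorem preservesTN_two_iff {F : ℝ → ℝ} :
    PreservesTN F 2 2 ↔ (∃ c, 0 ≤ c ∧ ∀ x, 0 ≤ x → F x = c) ∨
      ∃ c, 0 < c ∧ ((∀ x, 0 ≤ x → F x = if 0 < x then c else 0) ∨
        ∃ α : ℝ, 0 < α ∧ ∀ x, 0 ≤ x → F x = c * x ^ α) := by
  constructor
  · intro hF
    refine hF.const_or_rpow_on_pos.imp_right fun ⟨h0, c, hc, α, hα, hpow⟩ ↦ ⟨c, hc, ?_⟩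
    obtain rfl | hα := hα.eq_or_lt
    · refine .inl fun x hx ↦ ?_
      obtain rfl | hx := hx.eq_or_lt
      · simp [h0]
      · simp [hpow x hx, hx]
    · refine .inr ⟨α, hα, fun x hx ↦ ?_⟩
      obtain rfl | hx := hx.eq_or_lt
      · simp [h0, hα.ne']
      · exact hpow x hx
  · rintro (⟨c, hc, hconst⟩ | ⟨c, hc, hind | ⟨α, hα, hpow⟩⟩)
    · exact .of_nonneg_const hc hconst
    · exact (preservesTN_two_indicator.const_mul hc.le).congr fun x hx ↦ by simp [hind x hx]
    · exact ((preservesTN_two_rpow hα.le).const_mul hc.le).congr fun x hx ↦ (hpow x hx).symm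

/-! ### Size three -/

theorem le_of_hasDerivAt_nonneg {f f' : ℝ → ℝ} {a b : ℝ} (hab : a ≤ b)
    (hf : ∀ t ∈ Set.Icc a b, HasDerivAt f (f' t) t) (hf' : ∀ t ∈ Set.Ioo a b, 0 ≤ f' t) :
    f a ≤ f b := by
  refine monotoneOn_of_hasDerivWithinAt_nonneg (convex_Icc a b) (HasDerivAt.continuousOn hf)
    (fun t ht ↦ (hf t (interior_subset ht)).hasDerivWithinAt) ?_
    (Set.left_mem_Icc.2 hab) (Set.right_mem_Icc.2 hab) hab
  rwa [interior_Icc]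

/- With `p = x₂ < q = y₂`, let `a + b t` be `q - p` times the chord of `g` over `[p, q]`. It lies
above `(q - p) g` on `[p, q]` and below it elsewhere, so `ψ t = (q - p) φ t - a log t - b t`
increases from `y₃` to `x₃` and from `y₁` to `x₁`, and decreases from `x₂` to `y₂`. In the sum of
the three inequalities the logarithms cancel. -/
theorem add_add_le_add_add_of_mul_eq_of_lt {φ g : ℝ → ℝ}
    (hφ : ∀ t, 0 < t → HasDerivAt φ (g t / t) t)
    (hconv : ConvexOn ℝ (Set.Ioi 0) g) (hmono : MonotoneOn g (Set.Ioi 0))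
    {x₁ x₂ x₃ y₁ y₂ y₃ : ℝ} (hy₃ : 0 < y₃) (h₃ : y₃ ≤ x₃) (hx : x₃ ≤ x₂) (h₂ : x₂ < y₂)
    (hy : y₂ ≤ y₁) (h₁ : y₁ ≤ x₁) (hprod : y₁ * y₂ * y₃ = x₁ * x₂ * x₃)
    (hsum : y₁ + y₂ + y₃ ≤ x₁ + x₂ + x₃) :
    φ y₁ + φ y₂ + φ y₃ ≤ φ x₁ + φ x₂ + φ x₃ := by
  have hx₃ : 0 < x₃ := hy₃.trans_le h₃
  have hx₂ : 0 < x₂ := hx₃.trans_le hx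
  have hy₂ : 0 < y₂ := hx₂.trans h₂
  have hy₁ : 0 < y₁ := hy₂.trans_le hy
  have hx₁ : 0 < x₁ := hy₁.trans_le h₁
  set a := y₂ * g x₂ - x₂ * g y₂
  set b := g y₂ - g x₂
  have hb_nonneg : 0 ≤ b := sub_nonneg.2 (hmono hx₂ hy₂ h₂.le)
  let ψ t := (y₂ - x₂) * φ t - a * Real.log t - b * t
  have hψ {t : ℝ} (ht : 0 < t) : HasDerivAt ψ (((y₂ - x₂) * g t - a - b * t) / t) t := by
    refine ((((hφ t ht).const_mul _).sub ((Real.hasDerivAt_log ht.ne').const_mul a)).sub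
      ((hasDerivAt_id t).const_mul b)).congr_deriv ?_
    field_simp
  have hψ₃ : ψ y₃ ≤ ψ x₃ := le_of_hasDerivAt_nonneg h₃ (fun t ht ↦ hψ (hy₃.trans_le ht.1))
    fun t ⟨ht, ht'⟩ ↦ div_nonneg (by
      linarith [hconv.secant_mono_aux1 (hy₃.trans ht) hy₂ (ht'.trans_le hx) h₂]) (hy₃.trans ht).le
  have hψ₁ : ψ y₁ ≤ ψ x₁ := le_of_hasDerivAt_nonneg h₁ (fun t ht ↦ hψ (hy₁.trans_le ht.1))
    fun t ⟨ht, _⟩ ↦ div_nonneg (by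
      linarith [hconv.secant_mono_aux1 hx₂ (hy₁.trans ht) h₂ (hy.trans_lt ht)]) (hy₁.trans ht).le
  have hψ₂ : -ψ x₂ ≤ -ψ y₂ := le_of_hasDerivAt_nonneg (f := fun t ↦ -ψ t) h₂.le
    (fun t ht ↦ (hψ (hx₂.trans_le ht.1)).neg)
    fun t ⟨ht, ht'⟩ ↦ neg_nonneg.2 <| div_nonpos_of_nonpos_of_nonneg (by
      linarith [hconv.secant_mono_aux1 hx₂ hy₂ ht ht']) (hx₂.trans ht).le
  have hlog : Real.log y₁ + Real.log y₂ + Real.log y₃ =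
      Real.log x₁ + Real.log x₂ + Real.log x₃ := by
    rw [← Real.log_mul, ← Real.log_mul, ← Real.log_mul, ← Real.log_mul, hprod] <;> positivity
  refine le_of_mul_le_mul_left ?_ (sub_pos.2 h₂)
  linear_combination hψ₁ + hψ₂ + hψ₃ + b * hsum + a * hlog

theorem add_add_le_add_add_of_mul_eq {φ g : ℝ → ℝ} (hφ : ∀ t, 0 < t → HasDerivAt φ (g t / t) t)
    (hconv : ConvexOn ℝ (Set.Ioi 0) g) (hmono : MonotoneOn g (Set.Ioi 0))
    {x₁ x₂ x₃ y₁ y₂ y₃ : ℝ} (hy₃ : 0 < y₃) (h₃ : y₃ ≤ x₃) (hx : x₃ ≤ x₂) (h₂ : x₂ ≤ y₂)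
    (hy : y₂ ≤ y₁) (h₁ : y₁ ≤ x₁) (hprod : y₁ * y₂ * y₃ = x₁ * x₂ * x₃)
    (hsum : y₁ + y₂ + y₃ ≤ x₁ + x₂ + x₃) :
    φ y₁ + φ y₂ + φ y₃ ≤ φ x₁ + φ x₂ + φ x₃ := by
  obtain rfl | h₂ := h₂.eq_or_lt
  · have hx₂ : 0 < x₂ := hy₃.trans_le (h₃.trans hx)
    have hprod' : y₁ * y₃ = x₁ * x₃ := mul_right_cancel₀ hx₂.ne' (by linear_combination hprod)
    obtain rfl : x₁ = y₁ := h₁.antisymm' (by nlinarith)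
    obtain rfl : x₃ = y₃ := (mul_left_cancel₀ (hx₂.trans_le hy).ne' hprod').symm
    rfl
  · exact add_add_le_add_add_of_mul_eq_of_lt hφ hconv hmono hy₃ h₃ hx h₂ hy h₁ hprod hsum

theorem add_le_add_of_convexOn_of_monotoneOn {f : ℝ → ℝ} {s : Set ℝ} (hconv : ConvexOn ℝ s f)
    (hmono : MonotoneOn f s) {x₁ x₂ y₁ y₂ : ℝ} (hx₁ : x₁ ∈ s) (hx₂ : x₂ ∈ s)
    (hxy₁ : x₂ ≤ y₁) (hyx₁ : y₁ ≤ x₁) (hxy₂ : x₂ ≤ y₂) (hyx₂ : y₂ ≤ x₁)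
    (hsum : y₁ + y₂ ≤ x₁ + x₂) :
    f y₁ + f y₂ ≤ f x₁ + f x₂ := by
  obtain rfl | hx := (hxy₁.trans hyx₁).eq_or_lt
  · rw [le_antisymm hyx₁ hxy₁, le_antisymm hyx₂ hxy₂]
  have chord {t : ℝ} (ht : x₂ ≤ t) (ht' : t ≤ x₁) :
      (x₁ - x₂) * f t ≤ (x₁ - t) * f x₂ + (t - x₂) * f x₁ := by
    obtain rfl | ht := ht.eq_or_lt
    · linarith
    obtain rfl | ht' := ht'.eq_or_lt
    · linarith
    exact hconv.secant_mono_aux1 hx₂ hx₁ ht ht'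
  have hf : f x₂ ≤ f x₁ := hmono hx₂ hx₁ hx.le
  refine le_of_mul_le_mul_left ?_ (sub_pos.2 hx)
  nlinarith [chord hxy₁ hyx₁, chord hxy₂ hyx₂]

theorem rpow_add_rpow_add_rpow_le_of_mul_eq {α : ℝ} (hα : 1 ≤ α) {x₁ x₂ x₃ y₁ y₂ y₃ : ℝ}
    (hy₃ : 0 ≤ y₃) (h₂₃ : y₃ ≤ x₂) (h₃₃ : y₃ ≤ x₃) (h₂₁ : x₂ ≤ y₁) (h₂₂ : x₂ ≤ y₂)
    (h₃₁ : x₃ ≤ y₁) (h₃₂ : x₃ ≤ y₂) (h₁₁ : y₁ ≤ x₁) (h₁₂ : y₂ ≤ x₁)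
    (hprod : y₁ * y₂ * y₃ = x₁ * x₂ * x₃) (hsum : y₁ + y₂ + y₃ ≤ x₁ + x₂ + x₃) :
    y₁ ^ α + y₂ ^ α + y₃ ^ α ≤ x₁ ^ α + x₂ ^ α + x₃ ^ α := by
  wlog hx : x₃ ≤ x₂ generalizing x₂ x₃
  · linarith [this h₃₃ h₂₃ h₃₁ h₃₂ h₂₁ h₂₂ (by linarith) (by linarith) (le_of_not_ge hx)]
  wlog hy : y₂ ≤ y₁ generalizing y₁ y₂
  · linarith [this h₁₂ h₁₁ h₂₂ h₂₁ h₃₂ h₃₁ (by linarith) (by linarith) (le_of_not_ge hy)]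
  have hα₀ : 0 < α := zero_lt_one.trans_le hα
  obtain rfl | hy₃ := hy₃.eq_or_lt
  · obtain rfl : x₃ = 0 := by
      by_contra hne
      have : 0 < x₃ := h₃₃.lt_of_ne' hne
      have := mul_pos (mul_pos (this.trans_le (h₃₁.trans h₁₁)) (this.trans_le hx)) this
      linarith
    have := add_le_add_of_convexOn_of_monotoneOn (convexOn_rpow hα)
      (Real.monotoneOn_rpow_Ici_of_exponent_nonneg hα₀.le)
      (h₃₁.trans h₁₁) h₂₃ h₂₁ h₁₁ h₂₂ h₁₂ (by linarith)
    linarith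
  · refine add_add_le_add_add_of_mul_eq (φ := (· ^ α)) (g := fun t ↦ α * t ^ α)
      (fun t ht ↦ ?_) ?_ ?_ hy₃ h₃₃ hx h₂₂ hy h₁₁ hprod hsum
    · rw [mul_div_assoc, ← Real.rpow_sub_one ht.ne']
      exact Real.hasDerivAt_rpow_const (.inl ht.ne')
    · exact ((convexOn_rpow hα).subset Set.Ioi_subset_Ici_self (convex_Ioi 0)).smul hα₀.le
    · exact fun s hs t _ hst ↦ by
        have hs : 0 < s := hs
        dsimp only
        gcongr

theorem preservesTN_three_rpow {α : ℝ} (hα : 1 ≤ α) : PreservesTN (· ^ α) 3 3 := by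
  intro A hA
  have h0 := hA.apply_nonneg
  have hA₂ {r c : Fin 2 → Fin 3} (hr : Monotone r) (hc : Monotone c) :
      IsTNMat ((A.submatrix r c).map (· ^ α)) :=
    preservesTN_two_rpow (zero_le_one.trans hα) _ (hA.submatrix hr hc)
  refine isTNMat_fin_three_iff.2 ⟨fun i j ↦ Real.rpow_nonneg (h0 i j) α,
    fun i i' j j' hi hj ↦ ?_, ?_⟩
  · exact (hA₂ (r := ![i, i']) (c := ![j, j']) (by simp [hi.le]) (by simp [hj.le])).mul_le_mul
      (i := 0) (i' := 1) (j := 0) (j' := 1) zero_le_one zero_le_one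
  have hminor {i i' j j' : Fin 3} (k l : Fin 3) (hi : i ≤ i' := by decide)
      (hj : j ≤ j' := by decide) : A i j' * A i' j * A k l ≤ A i j * A i' j' * A k l :=
    mul_le_mul_of_nonneg_right (hA.mul_le_mul hi hj) (h0 k l)
  have hdet := hA.det_nonneg
  rw [Matrix.det_fin_three] at hdet ⊢
  have hpow := rpow_add_rpow_add_rpow_le_of_mul_eq hα
    (x₁ := A 0 0 * A 1 1 * A 2 2) (x₂ := A 0 1 * A 1 2 * A 2 0) (x₃ := A 0 2 * A 1 0 * A 2 1)
    (y₁ := A 0 0 * A 1 2 * A 2 1) (y₂ := A 0 1 * A 1 0 * A 2 2) (y₃ := A 0 2 * A 1 1 * A 2 0)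
    (mul_nonneg (mul_nonneg (h0 ..) (h0 ..)) (h0 ..))
    (by linarith [hminor (i := 0) (i' := 1) (j := 1) (j' := 2) 2 0])
    (by linarith [hminor (i := 1) (i' := 2) (j := 0) (j' := 1) 0 2])
    (by linarith [hminor (i := 0) (i' := 2) (j := 0) (j' := 1) 1 2])
    (by linarith [hminor (i := 1) (i' := 2) (j := 0) (j' := 2) 0 1])
    (by linarith [hminor (i := 0) (i' := 1) (j := 0) (j' := 2) 2 1])
    (by linarith [hminor (i := 0) (i' := 2) (j := 1) (j' := 2) 1 0])
    (by linarith [hminor (i := 1) (i' := 2) (j := 1) (j' := 2) 0 0])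
    (by linarith [hminor (i := 0) (i' := 1) (j := 0) (j' := 1) 2 2])
    (by ring) (by linarith)
  simp only [Real.mul_rpow (mul_nonneg (h0 _ _) (h0 _ _)) (h0 _ _),
    Real.mul_rpow (h0 _ _) (h0 _ _)] at hpow
  simp only [Matrix.map_apply]
  linarith

theorem PreservesTN.two_mul_le {F : ℝ → ℝ} (hF : PreservesTN F 3 3) (h0 : F 0 = 0) (h1 : 0 < F 1)
    (h2 : 0 < F 2) : 2 * F 1 ≤ F 2 := by
  have hA : IsTNMat !![2, 1, 0; 1, 1, 1; 0, 1, (2 : ℝ)] := by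
    refine isTNMat_fin_three_iff.2
      ⟨by simp [Fin.forall_fin_succ], by simp [Fin.forall_fin_succ], ?_⟩
    simp [Matrix.det_fin_three, show (2 : ℝ) ≤ 2 * 2 - 2 by norm_num]
  have hdet : 0 ≤ F 1 * F 2 * (F 2 - 2 * F 1) := by
    convert (hF _ hA).det_nonneg using 1
    simp [Matrix.det_fin_three, h0]
    ring
  exact sub_nonneg.1 (nonneg_of_mul_nonneg_right hdet (mul_pos h1 h2))

theorem PreservesTN.const_or_rpow {F : ℝ → ℝ} (hF : PreservesTN F 3 3) :
    (∃ c, 0 ≤ c ∧ ∀ x, 0 ≤ x → F x = c) ∨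
      ∃ c, 0 < c ∧ ∃ α : ℝ, 1 ≤ α ∧ ∀ x, 0 ≤ x → F x = c * x ^ α := by
  have hF₂ : PreservesTN F 2 2 := hF.mono (by simp) (by simp) (by simp) (by simp)
  refine hF₂.const_or_rpow_on_pos.imp_right fun ⟨h0, c, hc, α, _, hpow⟩ ↦ ?_
  have hdouble := hF.two_mul_le h0 (by simpa [hpow]) (by rw [hpow 2 two_pos]; positivity)
  rw [hpow 1 one_pos, hpow 2 two_pos, Real.one_rpow] at hdouble
  have hα : 1 ≤ α := (Real.rpow_le_rpow_left_iff one_lt_two).1 <|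
    le_of_mul_le_mul_left (by linarith [Real.rpow_one 2]) hc
  refine ⟨c, hc, α, hα, fun x hx ↦ ?_⟩
  obtain rfl | hx := hx.eq_or_lt
  · simp [h0, (one_pos.trans_le hα).ne']
  · exact hpow x hx

theorem preservesTN_three_iff {F : ℝ → ℝ} :
    PreservesTN F 3 3 ↔ (∃ c, 0 ≤ c ∧ ∀ x, 0 ≤ x → F x = c) ∨
      ∃ c, 0 < c ∧ ∃ α : ℝ, 1 ≤ α ∧ ∀ x, 0 ≤ x → F x = c * x ^ α := by
  refine ⟨fun hF ↦ hF.const_or_rpow, ?_⟩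
  rintro (⟨c, hc, hconst⟩ | ⟨c, hc, α, hα, hpow⟩)
  · exact .of_nonneg_const hc hconst
  · exact ((preservesTN_three_rpow hα).const_mul hc.le).congr fun x hx ↦ (hpow x hx).symm

/-! ### Size four and above -/

section

open Filter Topology

theorem tendsto_secondDifference_div_sq {f f' : ℝ → ℝ} {f'' x : ℝ}
    (hf : ∀ᶠ y in 𝓝 x, HasDerivAt f (f' y) y) (hf' : HasDerivAt f' f'' x) :
    Tendsto (fun t ↦ (f (x + 2 * t) - 2 * f (x + t) + f x) / t ^ 2) (𝓝[>] 0) (𝓝 f'') := by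
  have hline (k t : ℝ) : HasDerivAt (fun t ↦ x + k * t) k t := by
    simpa using ((hasDerivAt_id t).const_mul k).const_add x
  have hshift (k : ℝ) : Tendsto (fun t ↦ x + k * t) (𝓝[>] 0) (𝓝 x) := by
    simpa using (hline k 0).continuousAt.tendsto.mono_left nhdsWithin_le_nhds
  have hderiv (k : ℝ) :
      ∀ᶠ t in 𝓝[>] 0, HasDerivAt (fun t ↦ f (x + k * t)) (f' (x + k * t) * k) t :=
    ((hshift k).eventually hf).mono fun t ht ↦ ht.comp t (hline k t)
  have hcont (k : ℝ) : Tendsto (fun t ↦ f (x + k * t)) (𝓝[>] 0) (𝓝 (f x)) :=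
    hf.self_of_nhds.continuousAt.tendsto.comp (hshift k)
  have hslope (k : ℝ) :
      Tendsto (fun t ↦ t⁻¹ * (f' (x + k * t) - f' x)) (𝓝[>] 0) (𝓝 (f'' * k)) := by
    simpa using (hf'.comp_of_eq 0 (hline k 0) (by simp)).tendsto_slope_zero_right
  refine HasDerivAt.lhopital_zero_nhdsGT (g' := fun t ↦ 2 * t)
    (f' := fun t ↦ f' (x + 2 * t) * 2 - 2 * (f' (x + 1 * t) * 1)) ?_ ?_ ?_ ?_ ?_ ?_
  · filter_upwards [hderiv 2, hderiv 1] with t h2 h1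
    simpa using (h2.sub (h1.const_mul 2)).add_const (f x)
  · exact .of_forall fun t ↦ by simpa using hasDerivAt_pow 2 t
  · filter_upwards [self_mem_nhdsWithin] with t ht
    exact mul_ne_zero two_ne_zero (ne_of_gt ht)
  · convert ((hcont 2).sub ((hcont 1).const_mul 2)).add_const (f x) using 2 <;> ring_nf
  · exact (Continuous.tendsto' (by fun_prop) 0 0 (by simp)).mono_left nhdsWithin_le_nhds
  · convert (hslope 2).sub (hslope 1) using 2
    · field_simp; ring
    · ring

theorem eventually_hasDerivAt_one_add_mul_rpow (w α : ℝ) :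
    ∀ᶠ t in 𝓝 0, HasDerivAt (fun t ↦ (1 + w * t) ^ α) (α * w * (1 + w * t) ^ (α - 1)) t := by
  have hne : ∀ᶠ t in 𝓝 0, 1 + w * t ≠ 0 := by
    have hcont : ContinuousAt (fun t ↦ 1 + w * t) 0 := by fun_prop
    exact hcont.eventually_ne (by simp)
  filter_upwards [hne] with t ht
  have hline : HasDerivAt (fun t ↦ 1 + w * t) w t := by
    simpa using ((hasDerivAt_id t).const_mul w).const_add 1
  exact (hline.rpow_const (p := α) (.inl ht)).congr_deriv (by ring)

theorem tendsto_one_add_mul_rpow_slope (w α : ℝ) :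
    Tendsto (fun t ↦ t⁻¹ * ((1 + w * t) ^ α - 1)) (𝓝[>] 0) (𝓝 (α * w)) := by
  simpa using
    (eventually_hasDerivAt_one_add_mul_rpow w α).self_of_nhds.tendsto_slope_zero_right

theorem tendsto_one_add_mul_rpow_secondDifference (w α : ℝ) :
    Tendsto (fun t ↦ ((1 + 2 * w * t) ^ α - 2 * (1 + w * t) ^ α + 1) / t ^ 2) (𝓝[>] 0)
      (𝓝 (α * (α - 1) * w ^ 2)) := by
  have hsecond : HasDerivAt (fun t ↦ α * w * (1 + w * t) ^ (α - 1)) (α * (α - 1) * w ^ 2) 0 :=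
    ((eventually_hasDerivAt_one_add_mul_rpow w (α - 1)).self_of_nhds.const_mul (α * w)).congr_deriv
      (by simp; ring)
  convert tendsto_secondDifference_div_sq (eventually_hasDerivAt_one_add_mul_rpow w α) hsecond
    using 2 with t
  ring_nf
  simp

theorem det_bordered_eq {K : Type*} [Field K] {t : K} (ht : t ≠ 0) (a b c : Fin 3 → K) :
    (Matrix.of (Matrix.vecCons 1 fun i ↦ ![1, a i, b i, c i])).det = t ^ 4 * (Matrix.of fun i ↦
      ![t⁻¹ * (a i - 1), (b i - 2 * a i + 1) / t ^ 2, t⁻¹ * (c i - 1)]).det := by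
  rw [Matrix.det_succ_row_zero]
  simp [Fin.sum_univ_succ, Matrix.det_fin_three, Fin.succAbove]
  field_simp
  ring

theorem tendsto_det_bordered_rpow (α : ℝ) (w v : Fin 3 → ℝ) :
    Tendsto (fun t ↦ (Matrix.of (Matrix.vecCons 1 fun i ↦
      ![1, (1 + w i * t) ^ α, (1 + 2 * w i * t) ^ α, (1 + v i * t) ^ α])).det / t ^ 4) (𝓝[>] 0)
      (𝓝 (Matrix.of fun i ↦ ![α * w i, α * (α - 1) * w i ^ 2, α * v i]).det) := by
  let scaled (t : ℝ) : Matrix (Fin 3) (Fin 3) ℝ := Matrix.of fun i ↦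
    ![t⁻¹ * ((1 + w i * t) ^ α - 1),
      ((1 + 2 * w i * t) ^ α - 2 * (1 + w i * t) ^ α + 1) / t ^ 2, t⁻¹ * ((1 + v i * t) ^ α - 1)]
  have hscaled : Tendsto scaled (𝓝[>] 0)
      (𝓝 (Matrix.of fun i ↦ ![α * w i, α * (α - 1) * w i ^ 2, α * v i])) := by
    refine tendsto_pi_nhds.2 fun i ↦ tendsto_pi_nhds.2 ?_
    simp only [Fin.forall_fin_succ]
    exact ⟨tendsto_one_add_mul_rpow_slope (w i) α,
      tendsto_one_add_mul_rpow_secondDifference (w i) α,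
      tendsto_one_add_mul_rpow_slope (v i) α, fun j ↦ j.elim0⟩
  refine ((continuous_id.matrix_det.tendsto _).comp hscaled).congr' ?_
  filter_upwards [self_mem_nhdsWithin] with t (ht : 0 < t)
  rw [det_bordered_eq ht.ne', mul_div_cancel_left₀ _ (pow_pos ht 4).ne']
  rfl

/-- The totally non-negative matrices `J + t B`, `J` the all-ones matrix, whose entrywise powers of
exponent `α > 1` fail to be totally non-negative for small `t > 0`. With `w = 0, …, 3` numbering
the rows, the columns of `B` are `0`, `w`, `2 w` and `2 w + max (w - 1) 0`. -/
def rpowWitness (t : ℝ) : Matrix (Fin 4) (Fin 4) ℝ :=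
  !![1, 1, 1, 1;
     1, 1 + t, 1 + 2 * t, 1 + 2 * t;
     1, 1 + 2 * t, 1 + 4 * t, 1 + 5 * t;
     1, 1 + 3 * t, 1 + 6 * t, 1 + 8 * t]

theorem isTNMat_rpowWitness {t : ℝ} (ht : 0 ≤ t) : IsTNMat (rpowWitness t) := by
  have hcore : IsTNMat !![1, 0, 0; 0, t, 0; 0, t, t] := by
    refine isTNMat_fin_three_iff.2 ⟨?_, ?_, ?_⟩
    · simp [Fin.forall_fin_succ, ht]
    · simp [Fin.forall_fin_succ, ht, mul_self_nonneg t]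
    · simp [Matrix.det_fin_three, mul_self_nonneg t]
  have hsum := (hcore.submatrix (r := ![0, 1, 2, 2]) (c := ![0, 1, 1, 2])
    (by simp) (by simp)).partialSum_rows.partialSum_cols
  have hIic (i : Fin 4) : Finset.Iic i = Finset.univ.filter (· ≤ i) := by ext; simp
  convert hsum using 1
  ext i j
  fin_cases i <;> fin_cases j <;>
    simp [rpowWitness, hIic, Finset.sum_filter, Fin.sum_univ_succ] <;> ring

theorem PreservesTN.le_one_of_rpow {α : ℝ} (hα : 0 < α) (h : PreservesTN (· ^ α) 4 4) :
    α ≤ 1 := by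
  have hnonneg := ge_of_tendsto (b := 0) (tendsto_det_bordered_rpow α ![1, 2, 3] ![2, 5, 8]) <| by
    filter_upwards [self_mem_nhdsWithin] with t (ht : 0 < t)
    refine div_nonneg ?_ (by positivity)
    refine (h _ (isTNMat_rpowWitness ht.le)).det_nonneg.trans_eq (congrArg _ ?_)
    ext i j
    fin_cases i <;> fin_cases j <;> simp [rpowWitness] <;> ring_nf
  have hlimit : (Matrix.of fun i ↦ ![α * ![1, 2, 3] i, α * (α - 1) * ![1, 2, 3] i ^ 2,
      α * ![2, 5, 8] i]).det = -2 * α ^ 3 * (α - 1) := by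
    simp [Matrix.det_fin_three]
    ring
  nlinarith [pow_pos hα 3]

theorem preservesTN_iff_of_four_le {F : ℝ → ℝ} {d : ℕ} (hd : 4 ≤ d) :
    PreservesTN F d d ↔ (∃ c, 0 ≤ c ∧ ∀ x, 0 ≤ x → F x = c) ∨
      ∃ c, 0 < c ∧ ∀ x, 0 ≤ x → F x = c * x := by
  constructor
  · intro hF
    have hF₃ : PreservesTN F 3 3 := hF.mono (by simp) (by omega) (by simp) (by omega)
    refine (preservesTN_three_iff.1 hF₃).imp_right fun ⟨c, hc, α, hα, hpow⟩ ↦ ⟨c, hc, ?_⟩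
    have hrpow : PreservesTN (· ^ α) d d := (hF.const_mul (inv_nonneg.2 hc.le)).congr fun x hx ↦ by
      rw [hpow x hx, inv_mul_cancel_left₀ hc.ne']
    have hα₁ : α ≤ 1 := (hrpow.mono (by simp) hd (by simp) hd).le_one_of_rpow (by linarith)
    intro x hx
    rw [hpow x hx, le_antisymm hα₁ hα, Real.rpow_one]
  · rintro (⟨c, hc, hconst⟩ | ⟨c, hc, hlin⟩)
    · exact .of_nonneg_const hc hconst
    · exact ((preservesTN_id d d).const_mul hc.le).congr fun x hx ↦ (hlin x hx).symm

end

theorem stmt_0 (F : ℝ → ℝ) (m n : ℕ) (hm : 0 < m) (hn : 0 < n) (d : ℕ)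
    (hd : d = min m n) :
    List.TFAE
      [∀ A : Matrix (Fin m) (Fin n) ℝ, IsTNMat A → IsTNMat (A.map F),
       ∀ A : Matrix (Fin d) (Fin d) ℝ, IsTNMat A → IsTNMat (A.map F),
       (∃ c : ℝ, 0 ≤ c ∧ ∀ x : ℝ, 0 ≤ x → F x = c) ∨
         (d = 1 ∧ ∀ x : ℝ, 0 ≤ x → 0 ≤ F x) ∨
         (d = 2 ∧ ∃ c : ℝ, 0 < c ∧
           ((∀ x : ℝ, 0 ≤ x → F x = if 0 < x then c else 0) ∨
            (∃ α : ℝ, 0 < α ∧ ∀ x : ℝ, 0 ≤ x → F x = c * x ^ α))) ∨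
         (d = 3 ∧ ∃ c : ℝ, 0 < c ∧ ∃ α : ℝ, 1 ≤ α ∧
           ∀ x : ℝ, 0 ≤ x → F x = c * x ^ α) ∨
         (4 ≤ d ∧ ∃ c : ℝ, 0 < c ∧ ∀ x : ℝ, 0 ≤ x → F x = c * x)] := by
  tfae_have 1 ↔ 2 := hd ▸ preservesTN_iff_min hm hn
  tfae_have 2 ↔ 3 := by
    change PreservesTN F d d ↔ _
    obtain rfl | rfl | rfl | hd₄ : d = 1 ∨ d = 2 ∨ d = 3 ∨ 4 ≤ d := by omega
    · have hconst : (∃ c, 0 ≤ c ∧ ∀ x, 0 ≤ x → F x = c) → ∀ x, 0 ≤ x → 0 ≤ F x :=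
        fun ⟨c, hc, h⟩ x hx ↦ (h x hx).symm ▸ hc
      simpa [preservesTN_one_iff] using hconst
    · simp [preservesTN_two_iff]
    · simp [preservesTN_three_iff]
    · simp [preservesTN_iff_of_four_le hd₄, hd₄, show d ≠ 1 ∧ d ≠ 2 ∧ d ≠ 3 by omega]
  tfae_finish
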